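/- arXiv:1102.5557 — 2 statements merged into one kernel-verified Lean document; each statement's English description precedes it below -/
import Mathlib

section
/- Let Ω = ⋃_{j=1}^n (a_j, b_j) ⊆ ℝ be a finite union of bounded open intervals of total length 1 and let Λ ⊆ ℝ be a spectrum of Ω. Then there exists a finite T > 0 such that for every x ∈ ℝ the set φ(Λ ∩ (x, x+T)) spans the same linear subspace of ℂ^{2n} as φ(Λ), i.e., span φ(Λ ∩ (x, x+T)) = span φ(Λ). -/
open MeasureTheory Set

/-- The exponential function `e_λ(x) = exp(2πiλx)`. -/
noncomputable def expF (lam : ℝ) : ℝ → ℂ :=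
  fun x => Complex.exp (2 * (Real.pi : ℂ) * Complex.I * (lam : ℂ) * (x : ℂ))

/-- `Λ` is a spectrum of `Ω`. -/
def IsSpectrum (Ω Λ : Set ℝ) : Prop :=
  ∃ F : Λ → Lp ℂ 2 (volume.restrict Ω),
    (∀ l : Λ, ⇑(F l) =ᵐ[volume.restrict Ω] expF (l : ℝ)) ∧
    Orthonormal ℂ F ∧
    (Submodule.span ℂ (Set.range F)).topologicalClosure = ⊤

/-- The map `φ : ℝ → ℂ^{2n}`,
`φ(x) = (e^{-2πi a_1 x}, …, e^{-2πi a_n x}, e^{-2πi b_1 x}, …, e^{-2πi b_n x})`. -/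
noncomputable def phiMap (n : ℕ) (a b : Fin n → ℝ) (x : ℝ) : (Fin n → ℂ) × (Fin n → ℂ) :=
  (fun j => Complex.exp (-(2 * (Real.pi : ℂ) * Complex.I * (a j : ℂ) * (x : ℂ))),
   fun j => Complex.exp (-(2 * (Real.pi : ℂ) * Complex.I * (b j : ℂ) * (x : ℂ))))

/-! The function `u ↦ u ∫_Ω e_u` is a trigonometric polynomial, hence almost periodic, and it
vanishes on `λ - Λ` for every `λ ∈ Λ`. If `s` is an almost period of it, then `(t - μ) ∫_Ω e_{t-μ}`
is uniformly small over `μ ∈ Λ`, where `t = λ + s`; since `Λ` is separated, Parseval's identity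
`∑_μ |∫_Ω e_{t-μ}|² = 1` then forces some `μ ∈ Λ` to lie close to `t`. If `s` is an almost period of
`φ` too, then `φ(μ)` is close to `φ(λ)`; such `s` are relatively dense, so every window of a fixed
length contains such a `μ`. A small perturbation of a basis of `span φ(Λ)` within `span φ(Λ)` is
again a basis. -/

section TotallyBounded

theorem totallyBounded_of_image_eval {ι : Type*} {X : ι → Type*} [∀ i, UniformSpace (X i)]
    {s : Set (∀ i, X i)} (hs : ∀ i, TotallyBounded (Function.eval i '' s)) :
    TotallyBounded s := by
  simp only [totallyBounded_iff_ultrafilter] at hs ⊢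
  refine fun U hU => (cauchy_pi_iff' X).2 fun i => hs i (U.map (Function.eval i)) ?_
  exact Filter.le_principal_iff.2 (Filter.image_mem_map (Filter.le_principal_iff.1 hU))

theorem totallyBounded_of_image_fst_of_image_snd {X Y : Type*} [UniformSpace X] [UniformSpace Y]
    {s : Set (X × Y)} (hfst : TotallyBounded (Prod.fst '' s))
    (hsnd : TotallyBounded (Prod.snd '' s)) : TotallyBounded s := by
  simp only [totallyBounded_iff_ultrafilter] at hfst hsnd ⊢
  refine fun U hU => cauchy_prod_iff.2 ⟨hfst (U.map Prod.fst) ?_, hsnd (U.map Prod.snd) ?_⟩ <;>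
    exact Filter.le_principal_iff.2 (Filter.image_mem_map (Filter.le_principal_iff.1 hU))

end TotallyBounded

/-- Almost periodic functions on `ℝ`, in Bochner's formulation: the translates of `f` form a totally
bounded set for uniform convergence. Unlike Bohr's relatively dense sets of almost periods, this
passes to pairs and families of functions without further work. -/
structure AlmostPeriodic {E : Type*} [UniformSpace E] (f : ℝ → E) : Prop where
  continuous : Continuous f
  totallyBounded_translates :
    TotallyBounded (range fun s : ℝ => UniformFun.ofFun fun u : ℝ => f (u + s))

namespace AlmostPeriodic

section UniformSpace

variable {E F : Type*} [UniformSpace E] [UniformSpace F]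

theorem const (c : E) : AlmostPeriodic fun _ : ℝ => c :=
  ⟨continuous_const, finite_range_const.totallyBounded⟩

theorem comp {f : ℝ → E} {g : E → F} (hf : AlmostPeriodic f) (hg : UniformContinuous g) :
    AlmostPeriodic fun u => g (f u) where
  continuous := hg.continuous.comp hf.continuous
  totallyBounded_translates := by
    have := hf.totallyBounded_translates.image (UniformFun.postcomp_uniformContinuous hg)
    rwa [← range_comp] at this

theorem prodMk {f : ℝ → E} {g : ℝ → F} (hf : AlmostPeriodic f) (hg : AlmostPeriodic g) :
    AlmostPeriodic fun u => (f u, g u) where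
  continuous := hf.continuous.prodMk hg.continuous
  totallyBounded_translates := by
    rw [← totallyBounded_image_iff
      (UniformFun.uniformEquivProdArrow (α := ℝ) (β := E) (γ := F)).isUniformInducing]
    refine totallyBounded_of_image_fst_of_image_snd ?_ ?_ <;> simp only [← range_comp]
    exacts [hf.totallyBounded_translates, hg.totallyBounded_translates]

theorem pi {ι : Type*} {X : ι → Type*} [∀ i, UniformSpace (X i)] {f : ∀ i, ℝ → X i}
    (hf : ∀ i, AlmostPeriodic (f i)) : AlmostPeriodic fun u i => f i u where
  continuous := continuous_pi fun i => (hf i).continuous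
  totallyBounded_translates := by
    rw [← totallyBounded_image_iff (UniformFun.uniformEquivPiComm X (α := ℝ)).isUniformInducing]
    refine totallyBounded_of_image_eval fun i => ?_
    simp only [← range_comp]
    exact (hf i).totallyBounded_translates

theorem add [AddGroup E] [IsUniformAddGroup E] {f g : ℝ → E} (hf : AlmostPeriodic f)
    (hg : AlmostPeriodic g) : AlmostPeriodic (f + g) :=
  (hf.prodMk hg).comp (g := fun p => p.1 + p.2) uniformContinuous_add

theorem sum {ι : Type*} [AddCommGroup E] [IsUniformAddGroup E] {s : Finset ι} {f : ι → ℝ → E}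
    (hf : ∀ i ∈ s, AlmostPeriodic (f i)) : AlmostPeriodic (∑ i ∈ s, f i) :=
  Finset.sum_induction f AlmostPeriodic (fun _ _ => add) (const 0) hf

end UniformSpace

variable {E : Type*} [PseudoMetricSpace E] {f : ℝ → E}

theorem exists_finite_forall_dist_lt (hf : AlmostPeriodic f) {ε : ℝ} (hε : 0 < ε) :
    ∃ t : Set ℝ, t.Finite ∧ ∀ s, ∃ r ∈ t, ∀ u, dist (f (u + s)) (f (u + r)) < ε := by
  have hnet := totallyBounded_iff_subset.1 hf.totallyBounded_translates _
    ((UniformFun.hasBasis_uniformity ℝ E).mem_of_mem (Metric.dist_mem_uniformity hε))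
  rw [← image_univ, exists_subset_image_finite_and] at hnet
  obtain ⟨t, -, hfin, hcover⟩ := hnet
  refine ⟨t, hfin, fun s => ?_⟩
  simpa [UniformFun.gen] using hcover (mem_image_of_mem _ (mem_univ s))

protected theorem uniformContinuous (hf : AlmostPeriodic f) : UniformContinuous f := by
  refine Metric.uniformContinuous_iff.2 fun ε hε => ?_
  obtain ⟨t, hfin, hnet⟩ := hf.exists_finite_forall_dist_lt (ε := ε / 3) (by positivity)
  have hcont : ∀ᶠ h in nhds (0 : ℝ), ∀ r ∈ t, dist (f (h + r)) (f (0 + r)) < ε / 3 := by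
    refine (Filter.eventually_all_finite hfin).2 fun r _ => ?_
    exact Metric.tendsto_nhds.1 (hf.continuous.comp (continuous_add_const r)).continuousAt _
      (by positivity)
  obtain ⟨δ, hδ, hnear⟩ := Metric.eventually_nhds_iff.1 hcont
  refine ⟨δ, hδ, fun {x y} hxy => ?_⟩
  obtain ⟨r, hr, hyr⟩ := hnet y
  calc dist (f x) (f y)
      = dist (f (x - y + y)) (f (0 + y)) := by rw [sub_add_cancel, zero_add]
    _ ≤ dist (f (x - y + y)) (f (x - y + r)) + dist (f (x - y + r)) (f (0 + r))
          + dist (f (0 + r)) (f (0 + y)) := dist_triangle4 _ _ _ _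
    _ < ε / 3 + ε / 3 + ε / 3 := by
        have := hnear (y := x - y) (by simpa [Real.dist_eq] using hxy) r hr
        have := hyr (x - y)
        have := hyr 0
        rw [dist_comm (f (0 + r))]
        gcongr
    _ = ε := by ring

theorem exists_almostPeriod_mem_Ioo (hf : AlmostPeriodic f) {ε : ℝ} (hε : 0 < ε) :
    ∃ L > 0, ∀ x, ∃ s ∈ Ioo x (x + L), ∀ u, dist (f (u + s)) (f u) < ε := by
  obtain ⟨t, hfin, hnet⟩ := hf.exists_finite_forall_dist_lt hε
  obtain ⟨M, hM, hbound⟩ := hfin.isBounded.exists_pos_norm_lt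
  refine ⟨2 * M, by positivity, fun x => ?_⟩
  obtain ⟨r, hr, hclose⟩ := hnet (x + M)
  obtain ⟨hlt, hgt⟩ := abs_lt.1 (hbound r hr)
  refine ⟨x + M - r, ⟨by linarith, by linarith⟩, fun u => ?_⟩
  simpa [← add_sub_assoc, sub_add_eq_add_sub] using hclose (u - r)

end AlmostPeriodic

section Exponential

theorem norm_expF (l x : ℝ) : ‖expF l x‖ = 1 := by
  have := Complex.norm_exp_ofReal_mul_I (2 * Real.pi * l * x)
  push_cast at this
  rwa [mul_right_comm, mul_right_comm _ (l : ℂ)] at this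

theorem expF_comm (l x : ℝ) : expF l x = expF x l := by
  unfold expF
  ring_nf

theorem expF_zero_left (x : ℝ) : expF 0 x = 1 := by
  simp [expF]

theorem continuous_expF (l : ℝ) : Continuous (expF l) := by
  unfold expF
  fun_prop

theorem expF_add (l x y : ℝ) : expF l (x + y) = expF l x * expF l y := by
  unfold expF
  rw [← Complex.exp_add]
  push_cast
  ring_nf

theorem expF_mul_conj (l m x : ℝ) : expF l x * starRingEnd ℂ (expF m x) = expF (l - m) x := by
  unfold expF
  rw [← Complex.exp_conj, ← Complex.exp_add]
  simp only [map_mul, Complex.conj_ofReal, Complex.conj_I, map_ofNat, Complex.ofReal_sub]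
  ring_nf

theorem almostPeriodic_expF (l : ℝ) : AlmostPeriodic (expF l) where
  continuous := continuous_expF l
  totallyBounded_translates := by
    have hlip : LipschitzWith 1 fun z : ℂ => UniformFun.ofFun fun u : ℝ => expF l u * z := by
      refine UniformFun.lipschitzWith_ofFun_iff.2 fun u => .of_dist_le_mul fun z w => ?_
      simp [dist_eq_norm, ← mul_sub, norm_expF]
    refine ((isCompact_closedBall (0 : ℂ) 1).totallyBounded.image hlip.uniformContinuous).subset ?_
    rintro _ ⟨s, rfl⟩
    exact ⟨expF l s, by simp [norm_expF], by simp only [expF_add]⟩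

theorem almostPeriodic_phiMap (n : ℕ) (a b : Fin n → ℝ) : AlmostPeriodic (phiMap n a b) := by
  have hphi : phiMap n a b = fun x => (fun j => expF (-a j) x, fun j => expF (-b j) x) := by
    simp [funext_iff, phiMap, expF]
  rw [hphi]
  exact .prodMk (.pi fun _ => almostPeriodic_expF _) (.pi fun _ => almostPeriodic_expF _)

end Exponential

/-- The integral `∫_Ω e_u`, that is, the Fourier transform of the indicator function of `Ω`
at `-u`. -/
noncomputable def expIntegral (Ω : Set ℝ) (u : ℝ) : ℂ :=
  ∫ x in Ω, expF u x

section ExpIntegral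

variable {Ω : Set ℝ}

theorem integrableOn_expF (hΩ : volume Ω ≠ ⊤) (u : ℝ) : IntegrableOn (expF u) Ω :=
  Measure.integrableOn_of_bounded hΩ (continuous_expF u).aestronglyMeasurable
    (Filter.Eventually.of_forall fun x => (norm_expF u x).le)

theorem continuous_expIntegral (hΩ : volume Ω ≠ ⊤) : Continuous (expIntegral Ω) := by
  refine continuous_of_dominated (bound := fun _ => 1)
    (fun u => (continuous_expF u).aestronglyMeasurable)
    (fun u => Filter.Eventually.of_forall fun x => (norm_expF u x).le)
    (integrableOn_const hΩ) (Filter.Eventually.of_forall fun x => ?_)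
  simpa only [expF_comm _ x] using continuous_expF x

theorem mul_expIntegral_Ioo (α β u : ℝ) :
    u * expIntegral (Ioo α β) u
      = (2 * Real.pi * Complex.I)⁻¹ • (expF (max α β) u - expF α u) := by
  have hIoo : Ioo α β = Ioo α (max α β) := by
    rcases le_total α β with h | h <;> simp [h]
  rw [expF_comm _ u, expF_comm α u, expIntegral, hIoo, ← integral_Ioc_eq_integral_Ioo,
    ← intervalIntegral.integral_of_le (le_max_left α β)]
  rcases eq_or_ne u 0 with rfl | hu
  · simp [expF_zero_left]
  · have hu' : (u : ℂ) ≠ 0 := Complex.ofReal_ne_zero.2 hu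
    unfold expF
    rw [integral_exp_mul_complex (by simp [hu, Real.pi_ne_zero]), smul_eq_mul]
    field_simp

theorem almostPeriodic_mul_expIntegral_Ioo (α β : ℝ) :
    AlmostPeriodic fun u : ℝ => u * expIntegral (Ioo α β) u := by
  simp only [mul_expIntegral_Ioo]
  exact (((almostPeriodic_expF _).prodMk (almostPeriodic_expF _)).comp uniformContinuous_sub).comp
    (uniformContinuous_const_smul _)

theorem biInter_Ioo_eq_Ioo_sup'_inf' {ι α : Type*} [LinearOrder α] {t : Finset ι}
    (ht : t.Nonempty) (a b : ι → α) :
    ⋂ i ∈ t, Ioo (a i) (b i) = Ioo (t.sup' ht a) (t.inf' ht b) := by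
  ext x
  simp [forall_and]

theorem almostPeriodic_mul_expIntegral_iUnion_Ioo {ι : Type*} [Finite ι] (a b : ι → ℝ) :
    AlmostPeriodic fun u : ℝ => u * expIntegral (⋃ j, Ioo (a j) (b j)) u := by
  cases nonempty_fintype ι
  have inclusion_exclusion : (fun u : ℝ => u * expIntegral (⋃ j, Ioo (a j) (b j)) u)
      = ∑ t ∈ (Finset.univ : Finset ι).powerset with t.Nonempty, fun u : ℝ =>
          (-1 : ℝ) ^ (t.card + 1) • (u * expIntegral (⋂ j ∈ t, Ioo (a j) (b j)) u) := by
    funext u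
    have h := integral_biUnion_eq_sum_powerset (t := Finset.univ) (f := expF u)
      (fun j _ => measurableSet_Ioo)
      (fun j _ => integrableOn_expF (measure_Ioo_lt_top (a := a j) (b := b j)).ne u)
    simp only [Finset.mem_univ, iUnion_true] at h
    simp only [expIntegral, h, Finset.mul_sum, mul_smul_comm, Finset.sum_apply]
  rw [inclusion_exclusion]
  refine .sum fun t ht => .comp ?_ (uniformContinuous_const_smul _)
  rw [biInter_Ioo_eq_Ioo_sup'_inf' (Finset.mem_filter.1 ht).2]
  exact almostPeriodic_mul_expIntegral_Ioo _ _

theorem inner_eq_expIntegral {f g : Lp ℂ 2 (volume.restrict Ω)} {l m : ℝ}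
    (hf : f =ᵐ[volume.restrict Ω] expF l) (hg : g =ᵐ[volume.restrict Ω] expF m) :
    inner ℂ f g = expIntegral Ω (m - l) := by
  rw [L2.inner_def]
  refine integral_congr_ae ?_
  filter_upwards [hf, hg] with x hfx hgx
  rw [hfx, hgx, RCLike.inner_apply, expF_mul_conj]

end ExpIntegral

section InverseSquares

theorem injective_floor_div_of_pairwise_le_abs_sub {ι : Type*} {x : ι → ℝ} {d : ℝ} (hd : 0 < d)
    (hsep : Pairwise fun i j => d ≤ |x i - x j|) : Function.Injective fun i => ⌊x i / d⌋ := by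
  intro i j hij
  by_contra hne
  have hlt := Int.abs_sub_lt_one_of_floor_eq_floor hij
  rw [← sub_div, abs_div, abs_of_pos hd, div_lt_one hd] at hlt
  exact (hsep hne).not_gt hlt

theorem abs_floor_add_half_le (y : ℝ) : |(⌊y⌋ : ℝ) + 1 / 2| ≤ |y| + 1 / 2 := by
  have hdist : |(⌊y⌋ : ℝ) + 1 / 2 - y| ≤ 1 / 2 :=
    abs_le.2 ⟨by linarith [Int.lt_floor_add_one y], by linarith [Int.floor_le y]⟩
  linarith [abs_sub_abs_le_abs_sub ((⌊y⌋ : ℝ) + 1 / 2) y]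

theorem intCast_add_half_ne_zero (k : ℤ) : (k : ℝ) + 1 / 2 ≠ 0 := by
  intro h
  have : 2 * k + 1 = 0 := by exact_mod_cast (by linarith : (2 * k + 1 : ℝ) = 0)
  omega

theorem one_div_sq_le_mul_one_div_floor_add_half_sq {d η x : ℝ} (hd : 0 < d) (hη : 0 < η)
    (hx : η ≤ |x|) :
    1 / x ^ 2 ≤ (1 / d + 1 / (2 * η)) ^ 2 * (1 / ((⌊x / d⌋ : ℝ) + 1 / 2) ^ 2) := by
  have hx0 : x ≠ 0 := abs_pos.1 (hη.trans_le hx)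
  have hhalf : 1 / 2 ≤ |x| / (2 * η) := by
    rw [div_le_div_iff₀ two_pos (by positivity)]
    linarith
  have hfloor : |(⌊x / d⌋ : ℝ) + 1 / 2| ≤ |(1 / d + 1 / (2 * η)) * x| :=
    calc |(⌊x / d⌋ : ℝ) + 1 / 2| ≤ |x / d| + 1 / 2 := abs_floor_add_half_le _
      _ ≤ |x| / d + |x| / (2 * η) := by
          rw [abs_div, abs_of_pos hd]
          gcongr
      _ = |(1 / d + 1 / (2 * η)) * x| := by
          rw [abs_mul, abs_of_pos (by positivity : 0 < 1 / d + 1 / (2 * η))]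
          ring
  have hpos : 0 < ((⌊x / d⌋ : ℝ) + 1 / 2) ^ 2 := by
    have := intCast_add_half_ne_zero ⌊x / d⌋
    positivity
  rw [mul_one_div, div_le_div_iff₀ (by positivity) hpos, one_mul, ← mul_pow]
  exact sq_le_sq.2 hfloor

theorem exists_tsum_one_div_sq_le {ι : Type*} {d η : ℝ} (hd : 0 < d) (hη : 0 < η) :
    ∃ C ≥ 0, ∀ x : ι → ℝ, (Pairwise fun i j => d ≤ |x i - x j|) → (∀ i, η ≤ |x i|) →
      Summable (fun i => 1 / x i ^ 2) ∧ ∑' i, 1 / x i ^ 2 ≤ C := by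
  have hsummable : Summable fun k : ℤ => 1 / ((k : ℝ) + 1 / 2) ^ 2 := by
    simpa using (Real.summable_one_div_int_add_rpow (1 / 2) 2).2 one_lt_two
  refine ⟨(1 / d + 1 / (2 * η)) ^ 2 * ∑' k : ℤ, 1 / ((k : ℝ) + 1 / 2) ^ 2,
    mul_nonneg (sq_nonneg _) (tsum_nonneg fun k => by positivity), fun x hsep hfar => ?_⟩
  have hinj := injective_floor_div_of_pairwise_le_abs_sub hd hsep
  have hterm := fun i => one_div_sq_le_mul_one_div_floor_add_half_sq hd hη (hfar i)
  have hcomp := (hsummable.comp_injective hinj).mul_left ((1 / d + 1 / (2 * η)) ^ 2)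
  have hsum := hcomp.of_nonneg_of_le (fun i => by positivity) hterm
  refine ⟨hsum, (hsum.tsum_le_tsum hterm hcomp).trans ?_⟩
  rw [tsum_mul_left]
  gcongr
  exact tsum_comp_le_tsum_of_inj hsummable (fun k => by positivity) hinj

end InverseSquares

namespace IsSpectrum

variable {Ω Λ : Set ℝ}

theorem expIntegral_zero (hΛ : IsSpectrum Ω Λ) (hne : Λ.Nonempty) : expIntegral Ω 0 = 1 := by
  obtain ⟨F, hF, hon, -⟩ := hΛ
  obtain ⟨l, hl⟩ := hne
  rw [← sub_self l, ← inner_eq_expIntegral (hF ⟨l, hl⟩) (hF ⟨l, hl⟩),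
    inner_self_eq_norm_sq_to_K, hon.1]
  norm_num

theorem pairwise_expIntegral_sub_eq_zero (hΛ : IsSpectrum Ω Λ) :
    Λ.Pairwise fun l m => expIntegral Ω (l - m) = 0 := by
  obtain ⟨F, hF, hon, -⟩ := hΛ
  intro l hl m hm hlm
  rw [← inner_eq_expIntegral (hF ⟨m, hm⟩) (hF ⟨l, hl⟩)]
  exact hon.2 (by simpa using hlm.symm)

theorem hasSum_norm_sq_expIntegral (hΛ : IsSpectrum Ω Λ) (hne : Λ.Nonempty)
    (hΩ : volume Ω ≠ ⊤) (t : ℝ) : HasSum (fun l : Λ => ‖expIntegral Ω (t - l)‖ ^ 2) 1 := by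
  have hzero := hΛ.expIntegral_zero hne
  obtain ⟨F, hF, hon, hdense⟩ := hΛ
  have : IsFiniteMeasure (volume.restrict Ω) := isFiniteMeasure_restrict.2 hΩ
  have hmem : MemLp (expF t) 2 (volume.restrict Ω) :=
    .of_bound (continuous_expF t).aestronglyMeasurable 1
      (Filter.Eventually.of_forall fun x => (norm_expF t x).le)
  let f := hmem.toLp
  have hf : f =ᵐ[volume.restrict Ω] expF t := hmem.coeFn_toLp
  have hparseval := (HilbertBasis.mk hon hdense.ge).hasSum_inner_mul_inner f f
  rw [inner_eq_expIntegral hf hf, sub_self, hzero] at hparseval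
  convert Complex.hasSum_re hparseval using 2 with l
  swap
  · exact Complex.one_re.symm
  rw [HilbertBasis.coe_mk, ← inner_conj_symm f (F l), inner_eq_expIntegral (hF l) hf,
    ← Complex.normSq_eq_conj_mul_self, Complex.ofReal_re, Complex.normSq_eq_norm_sq]

theorem exists_pairwise_le_abs_sub (hΛ : IsSpectrum Ω Λ) (hΩ : volume Ω ≠ ⊤) :
    ∃ d > 0, Λ.Pairwise fun l m => d ≤ |l - m| := by
  rcases Λ.eq_empty_or_nonempty with rfl | hne
  · exact ⟨1, one_pos, pairwise_empty _⟩
  have hnonzero : ∀ᶠ u in nhds 0, expIntegral Ω u ≠ 0 :=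
    (continuous_expIntegral hΩ).continuousAt.eventually_ne
      (by rw [hΛ.expIntegral_zero hne]; exact one_ne_zero)
  obtain ⟨d, hd, hball⟩ := Metric.eventually_nhds_iff.1 hnonzero
  refine ⟨d, hd, fun l hl m hm hlm => ?_⟩
  by_contra! hlt
  exact hball (by simpa [Real.dist_eq] using hlt) (hΛ.pairwise_expIntegral_sub_eq_zero hl hm hlm)

theorem exists_abs_sub_lt_of_norm_mul_expIntegral_le (hΛ : IsSpectrum Ω Λ) (hne : Λ.Nonempty)
    (hΩ : volume Ω ≠ ⊤) {η : ℝ} (hη : 0 < η) :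
    ∃ δ > 0, ∀ t : ℝ, (∀ l ∈ Λ, ‖(t - l : ℝ) * expIntegral Ω (t - l)‖ ≤ δ) →
      ∃ l ∈ Λ, |l - t| < η := by
  obtain ⟨d, hd, hsep⟩ := hΛ.exists_pairwise_le_abs_sub hΩ
  obtain ⟨C, hC, hbound⟩ := exists_tsum_one_div_sq_le (ι := Λ) hd hη
  refine ⟨1 / (C + 1), by positivity, fun t hsmall => ?_⟩
  by_contra! hfar
  obtain ⟨hsummable, htsum⟩ := hbound (fun l => t - l)
    (fun l m hlm => by
      simpa [abs_sub_comm] using hsep l.2 m.2 (Subtype.coe_ne_coe.2 hlm))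
    (fun l => by simpa only [abs_sub_comm] using hfar l l.2)
  have hterm : ∀ l : Λ, ‖expIntegral Ω (t - l)‖ ^ 2 ≤ (1 / (C + 1)) ^ 2 * (1 / (t - l) ^ 2) := by
    intro l
    have hpos : 0 < |t - l| := hη.trans_le (by simpa only [abs_sub_comm] using hfar l l.2)
    have hle := hsmall l l.2
    rw [norm_mul, Complex.norm_real, Real.norm_eq_abs, ← le_div_iff₀' hpos] at hle
    calc ‖expIntegral Ω (t - l)‖ ^ 2 ≤ (1 / (C + 1) / |t - l|) ^ 2 := by gcongr
      _ = (1 / (C + 1)) ^ 2 * (1 / (t - l) ^ 2) := by rw [div_pow, sq_abs, mul_one_div]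
  have hone_le : 1 ≤ (1 / (C + 1)) ^ 2 * C :=
    calc 1 ≤ (1 / (C + 1)) ^ 2 * ∑' l : Λ, 1 / (t - l) ^ 2 :=
          hasSum_le hterm (hΛ.hasSum_norm_sq_expIntegral hne hΩ t) (hsummable.hasSum.mul_left _)
      _ ≤ (1 / (C + 1)) ^ 2 * C := by gcongr
  rw [div_pow, one_pow, one_div_mul_eq_div, le_div_iff₀ (by positivity)] at hone_le
  nlinarith

theorem exists_forall_mem_Ioo_dist_lt {E : Type*} [PseudoMetricSpace E] {φ : ℝ → E}
    (hΛ : IsSpectrum Ω Λ) (hΩ : volume Ω ≠ ⊤)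
    (hAP : AlmostPeriodic fun u : ℝ => u * expIntegral Ω u) (hφ : AlmostPeriodic φ) {ε : ℝ}
    (hε : 0 < ε) :
    ∃ T > 0, ∀ l ∈ Λ, ∀ x, ∃ m ∈ Λ ∩ Ioo x (x + T), dist (φ m) (φ l) < ε := by
  rcases Λ.eq_empty_or_nonempty with rfl | hne
  · exact ⟨1, one_pos, by simp⟩
  obtain ⟨η, hη, hunif⟩ := Metric.uniformContinuous_iff.1 hφ.uniformContinuous (ε / 2)
    (by positivity)
  obtain ⟨δ, hδ, hnear⟩ := hΛ.exists_abs_sub_lt_of_norm_mul_expIntegral_le hne hΩ hη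
  obtain ⟨L, hL, hperiod⟩ := (hAP.prodMk hφ).exists_almostPeriod_mem_Ioo
    (ε := min δ (ε / 2)) (by positivity)
  refine ⟨L + 2 * η, by positivity, fun l hl x => ?_⟩
  obtain ⟨s, ⟨hxs, hsx⟩, hs⟩ := hperiod (x + η - l)
  simp only [Prod.dist_eq, lt_min_iff, max_lt_iff] at hs
  have hvanish : ∀ m ∈ Λ, ((l - m : ℝ) : ℂ) * expIntegral Ω (l - m) = 0 := by
    intro m hm
    rcases eq_or_ne l m with rfl | hlm
    · simp
    · rw [hΛ.pairwise_expIntegral_sub_eq_zero hl hm hlm, mul_zero]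
  obtain ⟨m, hm, hmt⟩ := hnear (l + s) fun m hm => by
    have hshift := (hs (l - m)).1.1
    rw [hvanish m hm, dist_zero_right, sub_add_eq_add_sub] at hshift
    exact hshift.le
  obtain ⟨hlt, hgt⟩ := abs_lt.1 hmt
  refine ⟨m, ⟨hm, by linarith, by linarith⟩, ?_⟩
  calc dist (φ m) (φ l) ≤ dist (φ m) (φ (l + s)) + dist (φ (l + s)) (φ l) := dist_triangle _ _ _
    _ < ε / 2 + ε / 2 := add_lt_add (hunif hmt) (hs l).2.2
    _ = ε := add_halves ε

end IsSpectrum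

section Span

variable (𝕜 : Type*) {E : Type*} [NontriviallyNormedField 𝕜] [CompleteSpace 𝕜]
  [NormedAddCommGroup E] [NormedSpace 𝕜 E] [FiniteDimensional 𝕜 E]

theorem exists_forall_span_eq_of_dist_lt (S : Set E) :
    ∃ ε > 0, ∀ S' : Set E, S' ⊆ Submodule.span 𝕜 S → (∀ v ∈ S, ∃ w ∈ S', dist w v < ε) →
      Submodule.span 𝕜 S' = Submodule.span 𝕜 S := by
  obtain ⟨B, hBS, hspan, hli⟩ := exists_linearIndependent 𝕜 S
  have : Finite B := hli.finite
  cases nonempty_fintype B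
  obtain ⟨ε, hε, hball⟩ :=
    Metric.isOpen_iff.1 (isOpen_setOfPred_linearIndependent (𝕜 := 𝕜) (E := E) (ι := B)) _ hli
  refine ⟨ε, hε, fun S' hS' hnear => ?_⟩
  choose w hw hdist using fun v : B => hnear v (hBS v.2)
  have hwli : LinearIndependent 𝕜 w := hball ((dist_pi_lt_iff hε).2 hdist)
  have hwS' : Submodule.span 𝕜 (range w) ≤ Submodule.span 𝕜 S' :=
    Submodule.span_mono (range_subset_iff.2 hw)
  have hS'S : Submodule.span 𝕜 S' ≤ Submodule.span 𝕜 S := Submodule.span_le.2 hS'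
  have hrank : Module.finrank 𝕜 (Submodule.span 𝕜 (range w))
      = Module.finrank 𝕜 (Submodule.span 𝕜 S) := by
    rw [finrank_span_eq_card hwli, ← hspan, ← finrank_span_eq_card hli, Subtype.range_coe]
  have hwS := Submodule.eq_of_le_of_finrank_eq (hwS'.trans hS'S) hrank
  exact hS'S.antisymm (hwS ▸ hwS')

theorem window_generates_general {ι : Type*} [Finite ι] (a b : ι → ℝ) {Λ : Set ℝ}
    (hΛ : IsSpectrum (⋃ j, Ioo (a j) (b j)) Λ) {φ : ℝ → E} (hφ : AlmostPeriodic φ) :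
    ∃ T : ℝ, 0 < T ∧ ∀ x : ℝ,
      Submodule.span 𝕜 (φ '' (Λ ∩ Ioo x (x + T))) = Submodule.span 𝕜 (φ '' Λ) := by
  have hfinite : volume (⋃ j, Ioo (a j) (b j)) ≠ ⊤ :=
    (Bornology.isBounded_iUnion.2 fun j => Metric.isBounded_Ioo (a j) (b j)).measure_lt_top.ne
  obtain ⟨ε, hε, hspan⟩ := exists_forall_span_eq_of_dist_lt 𝕜 (φ '' Λ)
  obtain ⟨T, hT, hreturn⟩ := hΛ.exists_forall_mem_Ioo_dist_lt hfinite
    (almostPeriodic_mul_expIntegral_iUnion_Ioo a b) hφ hε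
  refine ⟨T, hT, fun x => hspan _ ?_ ?_⟩
  · exact (image_mono inter_subset_left).trans Submodule.subset_span
  · rintro _ ⟨l, hl, rfl⟩
    obtain ⟨m, hm, hml⟩ := hreturn l hl x
    exact ⟨φ m, mem_image_of_mem φ hm, hml⟩

end Span

/-- There is a window length `T` such that every window `Λ ∩ (x, x+T)` is a
generating set: `span φ(Λ ∩ (x, x+T)) = span φ(Λ)`. -/
theorem window_generates (n : ℕ) (a b : Fin n → ℝ) (Ω : Set ℝ)
    (hΩ : Ω = ⋃ j, Ioo (a j) (b j))
    (hvol : volume Ω = 1)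
    (Λ : Set ℝ) (hΛ : IsSpectrum Ω Λ) :
    ∃ T : ℝ, 0 < T ∧ ∀ x : ℝ,
      Submodule.span ℂ (phiMap n a b '' (Λ ∩ Ioo x (x + T)))
        = Submodule.span ℂ (phiMap n a b '' Λ) :=
  window_generates_general ℂ a b (hΩ ▸ hΛ) (almostPeriodic_phiMap n a b)
end

section
/- Let Ω ⊆ ℝ be a finite union of bounded open intervals of total length 1 and let Λ be a spectrum of Ω. Suppose L ⊆ ℝ and (c_n)_{n≥1} is a sequence with c_n ∈ Λ such that for every n ≥ 1 one has L ∩ (−n, n) = (Λ − c_n) ∩ (−n, n). Then L is also a spectrum of Ω. -/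
open MeasureTheory Set

/-!
Write `φ s = ∫ x in Ω, exp (2πisx)` and let `e_s` be the exponential of frequency `s`, so that
`⟪e_s, e_t⟫ = φ (t - s)`. If `Λ` is a spectrum, then `φ` vanishes on the nonzero differences of `Λ`
and Parseval gives `∑ λ ∈ Λ, |φ (t - λ)|² = 1` for all `t`. Both properties are translation
invariant. Any two points of `L` lie in a common translate of `Λ`, so the exponentials of `L` are
orthonormal.

For completeness, note that `φ` is continuous with `φ 0 ≠ 0`, which makes `Λ` uniformly separated,
and that `|φ|²` is integrable by Plancherel. Hence, for `t` in a fixed small ball, the part of the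
Parseval sum over the points of `Λ - c` far from the origin has integral at most a tail of
`∫ |φ|²`. Letting the ball on which `L` and `Λ - c` agree grow, `∑ l ∈ L, |φ (t - l)|² ≥ 1` for
almost every `t`, that is, `e_t` lies in the closed span of the exponentials of `L`. Since `e_t`
depends continuously on `t`, every `e_t` lies there, and the `e_λ` with `λ ∈ Λ` already span.
-/

open Filter Metric Topology ENNReal FourierTransform

section Hilbert

variable {ι 𝕜 H : Type*} [RCLike 𝕜] [NormedAddCommGroup H] [InnerProductSpace 𝕜 H]

theorem tsum_enorm_inner_sq_le_of_orthonormal {v : ι → H} (hv : Orthonormal 𝕜 v) (x : H) :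
    ∑' i, ‖inner 𝕜 (v i) x‖ₑ ^ 2 ≤ ‖x‖ₑ ^ 2 := by
  refine ENNReal.summable.tsum_le_of_sum_le fun s ↦ ?_
  simp only [← ofReal_norm, ← ENNReal.ofReal_pow (norm_nonneg _)]
  rw [← ENNReal.ofReal_sum_of_nonneg fun _ _ ↦ by positivity]
  exact ENNReal.ofReal_le_ofReal (hv.sum_inner_products_le x)

theorem tsum_enorm_inner_sq_of_hilbertBasis (b : HilbertBasis ι 𝕜 H) (x : H) :
    ∑' i, ‖inner 𝕜 (b i) x‖ₑ ^ 2 = ‖x‖ₑ ^ 2 := by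
  have parseval : HasSum (fun i ↦ ‖inner 𝕜 (b i) x‖ ^ 2) (‖x‖ ^ 2) := by
    have h := RCLike.hasSum_re 𝕜 (b.hasSum_inner_mul_inner x x)
    simpa only [← inner_conj_symm x (b _), RCLike.conj_mul, inner_self_eq_norm_sq_to_K,
      ← RCLike.ofReal_pow, RCLike.ofReal_re] using h
  simp only [← ofReal_norm, ← ENNReal.ofReal_pow (norm_nonneg _)]
  rw [← ENNReal.ofReal_tsum_of_nonneg (fun _ ↦ by positivity) parseval.summable, parseval.tsum_eq]

theorem mem_closure_span_of_enorm_sq_le_tsum [CompleteSpace H] {v : ι → H}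
    (hv : Orthonormal 𝕜 v) {x : H} (hx : ‖x‖ₑ ^ 2 ≤ ∑' i, ‖inner 𝕜 (v i) x‖ₑ ^ 2) :
    x ∈ (Submodule.span 𝕜 (range v)).topologicalClosure := by
  set K := (Submodule.span 𝕜 (range v)).topologicalClosure
  have hvK (i : ι) : v i ∈ K := Submodule.le_topologicalClosure _ (Submodule.subset_span ⟨i, rfl⟩)
  have inner_proj (i : ι) : inner 𝕜 (v i) (K.starProjection x) = inner 𝕜 (v i) x := by
    rw [← Submodule.inner_starProjection_left_eq_right,
      Submodule.starProjection_eq_self_iff.2 (hvK i)]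
  have enorm_le : ‖x‖ₑ ^ 2 ≤ ‖K.starProjection x‖ₑ ^ 2 := by
    refine hx.trans ?_
    simp only [← inner_proj]
    exact tsum_enorm_inner_sq_le_of_orthonormal hv _
  rw [Submodule.mem_iff_norm_starProjection]
  refine (K.norm_starProjection_apply_le x).antisymm ?_
  rwa [ENNReal.pow_le_pow_left_iff two_ne_zero, enorm_le_iff_norm_le] at enorm_le

theorem continuous_of_continuous_inner {X : Type*} [TopologicalSpace X] {f : X → H}
    (hf : Continuous fun p : X × X ↦ inner 𝕜 (f p.1) (f p.2)) : Continuous f := by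
  have re_inner {u v : X → X} (hu : Continuous u) (hv : Continuous v) :
      Continuous fun x ↦ RCLike.re (inner 𝕜 (f (u x)) (f (v x))) :=
    RCLike.continuous_re.comp (hf.comp (hu.prodMk hv))
  refine continuous_iff_continuousAt.2 fun a ↦ tendsto_iff_norm_sub_tendsto_zero.2 ?_
  have norm_sub_eq (x : X) : ‖f x - f a‖ = √(RCLike.re (inner 𝕜 (f x) (f x))
      - 2 * RCLike.re (inner 𝕜 (f x) (f a)) + RCLike.re (inner 𝕜 (f a) (f a))) := by
    rw [inner_self_eq_norm_sq, inner_self_eq_norm_sq, ← norm_sub_sq, Real.sqrt_sq (norm_nonneg _)]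
  have norm_sub_cont : Continuous fun x ↦ ‖f x - f a‖ := by
    simp only [norm_sub_eq]
    exact (((re_inner continuous_id continuous_id).sub
      ((re_inner continuous_id continuous_const).const_mul 2)).add continuous_const).sqrt
  simpa only [sub_self, norm_zero] using norm_sub_cont.tendsto a

end Hilbert

section Plancherel

variable {E F : Type*} [NormedAddCommGroup E] [InnerProductSpace ℝ E] [FiniteDimensional ℝ E]
  [MeasurableSpace E] [BorelSpace E]
  [NormedAddCommGroup F] [InnerProductSpace ℂ F] [CompleteSpace F]

-- Both sides are the same tempered distribution: the Fourier transform moves onto test functions.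
theorem fourier_ae_eq_fourier_toLp {f : E → F} (hf : Integrable f) (hf₂ : MemLp f 2) :
    𝓕 f =ᵐ[volume] (𝓕 (hf₂.toLp f) : Lp F 2 (volume : Measure E)) := by
  have hcont : Continuous (𝓕 f) :=
    VectorFourier.fourierIntegral_continuous Real.continuous_fourierChar continuous_inner hf
  refine ae_eq_of_integral_contDiff_smul_eq hcont.locallyIntegrable
    ((Lp.memLp _).locallyIntegrable one_le_two) fun g hg hg_supp ↦ ?_
  have hg_supp' : HasCompactSupport (Complex.ofRealCLM ∘ g) := hg_supp.comp_left rfl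
  let ψ : SchwartzMap E ℂ := hg_supp'.toSchwartzMap (by fun_prop)
  calc ∫ ξ, g ξ • 𝓕 f ξ = ∫ ξ, ψ ξ • 𝓕 f ξ := by simp [ψ]
    _ = ∫ x, 𝓕 ψ x • f x := by
      have := VectorFourier.integral_fourierIntegral_smul_eq_flip (L := innerₗ E)
        Real.continuous_fourierChar continuous_inner (ψ.integrable (μ := volume)) hf
      rw [flip_innerₗ] at this
      rw [SchwartzMap.fourier_coe]
      exact this.symm
    _ = ∫ x, 𝓕 ψ x • hf₂.toLp f x := by
      refine integral_congr_ae ?_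
      filter_upwards [hf₂.coeFn_toLp] with x hx
      rw [hx]
    _ = Lp.toTemperedDistribution (𝓕 (hf₂.toLp f) : Lp F 2 (volume : Measure E)) ψ := by
      rw [← Lp.fourier_toTemperedDistribution_eq, TemperedDistribution.fourier_apply,
        Lp.toTemperedDistribution_apply]
    _ = ∫ ξ, g ξ • (𝓕 (hf₂.toLp f) : Lp F 2 (volume : Measure E)) ξ := by
      simp [ψ, Lp.toTemperedDistribution_apply]

theorem memLp_two_fourier {f : E → F} (hf : Integrable f) (hf₂ : MemLp f 2) : MemLp (𝓕 f) 2 :=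
  (Lp.memLp _).ae_eq (fourier_ae_eq_fourier_toLp hf hf₂).symm

theorem lintegral_enorm_sq_charFun_restrict_ne_top {Ω : Set E} (hΩ : volume Ω ≠ ∞) :
    ∫⁻ s, ‖charFun (volume.restrict Ω) ((2 * Real.pi) • s)‖ₑ ^ 2 ≠ ∞ := by
  -- `Ω` need not be measurable, but its measurable hull induces the same restricted measure.
  let S := toMeasurable volume Ω
  have hS : MeasurableSet S := measurableSet_toMeasurable _ _
  have hSfin : volume S ≠ ∞ := by rwa [measure_toMeasurable]
  have indicator_memLp (p : ℝ≥0∞) : MemLp (S.indicator fun _ ↦ (1 : ℂ)) p :=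
    memLp_indicator_const p hS 1 (.inr hSfin)
  have charFun_eq (s : E) : charFun (volume.restrict Ω) ((2 * Real.pi) • s) =
      𝓕 (S.indicator fun _ ↦ (1 : ℂ)) (-s) := by
    rw [← Measure.restrict_toMeasurable hΩ, charFun_apply, Real.fourier_eq',
      ← integral_indicator hS]
    refine integral_congr_ae (.of_forall fun x ↦ ?_)
    by_cases hx : x ∈ S
    · simp [S, hx, inner_smul_right]
    · simp [S, hx]
  have fourier_memLp := memLp_two_fourier (memLp_one_iff_integrable.1 (indicator_memLp 1))
    (indicator_memLp 2)
  calc ∫⁻ s, ‖charFun (volume.restrict Ω) ((2 * Real.pi) • s)‖ₑ ^ 2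
      = ∫⁻ s, ‖𝓕 (S.indicator fun _ ↦ (1 : ℂ)) s‖ₑ ^ 2 := by
        simp only [charFun_eq]
        exact lintegral_neg_eq_self (fun s ↦ ‖𝓕 (S.indicator fun _ ↦ (1 : ℂ)) s‖ₑ ^ 2)
    _ ≠ ∞ := by
      simpa using (lintegral_rpow_enorm_lt_top_of_eLpNorm_lt_top two_ne_zero ofNat_ne_top
        fourier_memLp.eLpNorm_lt_top).ne

end Plancherel

theorem exists_pos_le_norm_of_eq_zero {E X : Type*} [SeminormedAddGroup E] [TopologicalSpace X]
    [T1Space X] [Zero X] {f : E → X} (hf : ContinuousAt f 0) (hf₀ : f 0 ≠ 0) :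
    ∃ r > 0, ∀ s, f s = 0 → r ≤ ‖s‖ := by
  obtain ⟨r, hr, hball⟩ := Metric.eventually_nhds_iff_ball.1 (hf.eventually_ne hf₀)
  exact ⟨r, hr, fun s hs ↦ not_lt.1 fun hsr ↦ hball s (mem_ball_zero_iff.2 hsr) hs⟩

section LocalLimits

variable {E : Type*} [SeminormedAddCommGroup E]

/-- `L` is a local limit of translates of `Λ`: on each large ball about the origin it agrees with
some translate `Λ - c`, where `c` may depend on the ball. Natural radii suffice, as balls are
nested. -/
def IsLocalLimitOfTranslates (L Λ : Set E) : Prop :=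
  ∀ᶠ R : ℕ in atTop, ∃ c : E, L ∩ ball 0 R = (fun x ↦ x - c) '' Λ ∩ ball 0 R

theorem pairwise_sub_image_sub {p : E → Prop} {Λ : Set E} (hΛ : Λ.Pairwise fun x y ↦ p (x - y))
    (c : E) : ((fun x ↦ x - c) '' Λ).Pairwise fun x y ↦ p (x - y) := by
  rw [sub_left_injective.injOn.pairwise_image]
  intro x hx y hy hxy
  simpa only [Function.onFun, sub_sub_sub_cancel_right] using hΛ hx hy hxy

theorem IsLocalLimitOfTranslates.pairwise_sub {p : E → Prop} {L Λ : Set E}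
    (hL : IsLocalLimitOfTranslates L Λ) (hΛ : Λ.Pairwise fun x y ↦ p (x - y)) :
    L.Pairwise fun x y ↦ p (x - y) := by
  intro x hx y hy hxy
  have large (z : E) : ∀ᶠ R : ℕ in atTop, ‖z‖ < R :=
    tendsto_natCast_atTop_atTop.eventually_gt_atTop _
  obtain ⟨R, ⟨c, hc⟩, hxR, hyR⟩ := (hL.and ((large x).and (large y))).exists
  have mem_translate {z : E} (hz : z ∈ L) (hzR : ‖z‖ < R) : z ∈ (fun x ↦ x - c) '' Λ :=
    (hc.subset ⟨hz, mem_ball_zero_iff.2 hzR⟩).1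
  exact pairwise_sub_image_sub hΛ c (mem_translate hx hxR) (mem_translate hy hyR) hxy

theorem pairwiseDisjoint_ball_of_le_norm_sub {M : Set E} {r : ℝ}
    (hM : M.Pairwise fun x y ↦ 2 * r ≤ ‖x - y‖) : M.PairwiseDisjoint (ball · r) :=
  fun x hx y hy hxy ↦ ball_disjoint_ball <| by
    simpa only [← two_mul, dist_eq_norm] using hM hx hy hxy

theorem countable_of_le_norm_sub [SecondCountableTopology E] {M : Set E} {r : ℝ} (hr : 0 < r)
    (hM : M.Pairwise fun x y ↦ 2 * r ≤ ‖x - y‖) : M.Countable :=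
  (pairwiseDisjoint_ball_of_le_norm_sub hM).countable_of_isOpen (fun _ _ ↦ isOpen_ball)
    fun _ _ ↦ nonempty_ball.2 hr

variable [MeasurableSpace E] {μ : Measure E} {G : E → ℝ≥0∞}

theorem exists_setLIntegral_compl_ball_lt [OpensMeasurableSpace E] (hG : ∫⁻ s, G s ∂μ ≠ ∞)
    {ε : ℝ≥0∞} (hε : ε ≠ 0) :
    ∃ R : ℝ, ∫⁻ s in (ball 0 R)ᶜ, G s ∂μ < ε := by
  have := isFiniteMeasure_withDensity hG
  have inter_empty : ⋂ n : ℕ, (ball (0 : E) n)ᶜ = ∅ := by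
    rw [← compl_iUnion, iUnion_ball_nat, compl_univ]
  have tail_tendsto := tendsto_measure_iInter_atTop (μ := μ.withDensity G)
    (s := fun n : ℕ ↦ (ball (0 : E) n)ᶜ) (fun _ ↦ measurableSet_ball.compl.nullMeasurableSet)
    (fun _ _ h ↦ compl_subset_compl.2 (ball_subset_ball (Nat.cast_le.2 h)))
    ⟨0, measure_ne_top _ _⟩
  rw [inter_empty, measure_empty] at tail_tendsto
  obtain ⟨n, hn⟩ := (tail_tendsto.eventually_lt_const hε.bot_lt).exists
  exact ⟨n, by rwa [Function.comp_apply, withDensity_apply _ measurableSet_ball.compl] at hn⟩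

variable [BorelSpace E] [SecondCountableTopology E] [μ.IsAddRightInvariant] {r : ℝ}

theorem setLIntegral_tsum_sub_le (hG : Measurable G) (hr : 0 < r) {M : Set E}
    (hM : M.Pairwise fun x y ↦ 2 * r ≤ ‖x - y‖) {x : E} {A : Set E}
    (hA : ∀ m ∈ M, ball (x - m) r ⊆ A) :
    ∫⁻ t in ball x r, ∑' m : M, G (t - m) ∂μ ≤ ∫⁻ s in A, G s ∂μ := by
  have := (countable_of_le_norm_sub hr hM).to_subtype
  have reflected_disjoint : Pairwise (Function.onFun Disjoint fun m : M ↦ ball (x - m) r) := by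
    intro m n hmn
    refine ball_disjoint_ball ?_
    rw [← two_mul, dist_sub_left, dist_eq_norm]
    exact hM m.2 n.2 (Subtype.coe_ne_coe.2 hmn)
  calc ∫⁻ t in ball x r, ∑' m : M, G (t - m) ∂μ
      = ∑' m : M, ∫⁻ t in ball x r, G (t - m) ∂μ :=
        lintegral_tsum fun m ↦ (hG.comp (measurable_sub_const _)).aemeasurable
    _ = ∑' m : M, ∫⁻ s in ball (x - m) r, G s ∂μ := by
      refine tsum_congr fun m ↦ ?_
      rw [← (measurePreserving_sub_right μ (m : E)).setLIntegral_comp_preimage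
        measurableSet_ball hG]
      congr 3
      ext t
      simp only [mem_preimage, mem_ball, dist_sub_right]
    _ = ∫⁻ s in ⋃ m : M, ball (x - m) r, G s ∂μ :=
      (lintegral_iUnion (fun _ ↦ measurableSet_ball) reflected_disjoint G).symm
    _ ≤ ∫⁻ s in A, G s ∂μ := lintegral_mono_set (iUnion_subset fun m ↦ hA m m.2)

theorem IsLocalLimitOfTranslates.setLIntegral_tsub_tsum_eq_zero {L Λ : Set E}
    (hL : IsLocalLimitOfTranslates L Λ) (hG : Measurable G) (hGint : ∫⁻ s, G s ∂μ ≠ ∞)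
    (hr : 0 < r) (hΛ : Λ.Pairwise fun x y ↦ 2 * r ≤ ‖x - y‖) {w : ℝ≥0∞}
    (hw : ∀ t, w ≤ ∑' l : Λ, G (t - l)) (x : E) :
    ∫⁻ t in ball x r, w - ∑' l : L, G (t - l) ∂μ = 0 := by
  by_contra hne
  obtain ⟨R₀, hR₀⟩ := exists_setLIntegral_compl_ball_lt hGint hne
  obtain ⟨R, ⟨c, hc⟩, hR⟩ := (hL.and
    (tendsto_natCast_atTop_atTop.eventually_ge_atTop (R₀ + r + ‖x‖))).exists
  set M := (fun y ↦ y - c) '' Λ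
  have cover : M ⊆ L ∪ M \ ball 0 R := fun m hm ↦
    (em (m ∈ ball 0 (R : ℝ))).imp (fun hmR ↦ (hc.superset ⟨hm, hmR⟩).1) fun hmR ↦ ⟨hm, hmR⟩
  have defect_le (t : E) :
      w - ∑' l : L, G (t - l) ≤ ∑' m : ↑(M \ ball 0 R), G (t - m) := by
    rw [tsub_le_iff_left]
    calc w ≤ ∑' l : Λ, G (t + c - l) := hw _
      _ = ∑' m : M, G (t - m) := by
        rw [tsum_image (fun m ↦ G (t - m)) sub_left_injective.injOn]
        simp only [sub_sub_eq_add_sub]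
      _ ≤ ∑' m : ↑(L ∪ M \ ball 0 R), G (t - m) :=
        ENNReal.tsum_mono_subtype (fun m ↦ G (t - m)) cover
      _ ≤ _ := ENNReal.tsum_union_le (fun m ↦ G (t - m)) _ _
  have far (m : E) (hm : m ∈ M \ ball 0 R) : ball (x - m) r ⊆ (ball 0 R₀)ᶜ := by
    intro s hs hsR₀
    rw [mem_ball_iff_norm] at hs
    rw [mem_ball_zero_iff] at hsR₀
    refine hm.2 (mem_ball_zero_iff.2 ?_)
    calc ‖m‖ = ‖s - (x - m) - s + x‖ := by congr 1; abel
      _ ≤ ‖s - (x - m)‖ + ‖s‖ + ‖x‖ := norm_add_le_of_le (norm_sub_le _ _) le_rfl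
      _ < R := by linarith
  refine ((lintegral_mono defect_le).trans ?_).not_gt hR₀
  have separated := pairwise_sub_image_sub (p := fun z ↦ 2 * r ≤ ‖z‖) hΛ c
  exact setLIntegral_tsum_sub_le hG hr (separated.mono sdiff_subset) far

theorem IsLocalLimitOfTranslates.ae_le_tsum {L Λ : Set E} (hL : IsLocalLimitOfTranslates L Λ)
    (hG : Measurable G) (hGint : ∫⁻ s, G s ∂μ ≠ ∞) (hr : 0 < r)
    (hΛ : Λ.Pairwise fun x y ↦ 2 * r ≤ ‖x - y‖) {w : ℝ≥0∞} (hw : ∀ t, w ≤ ∑' l : Λ, G (t - l)) :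
    ∀ᵐ t ∂μ, w ≤ ∑' l : L, G (t - l) := by
  have := (countable_of_le_norm_sub hr
    (hL.pairwise_sub (p := fun z ↦ 2 * r ≤ ‖z‖) hΛ)).to_subtype
  have hmeas : Measurable fun t ↦ w - ∑' l : L, G (t - l) := by fun_prop
  have locally_ae (x : E) : ∀ᵐ t ∂μ.restrict (ball x r), w ≤ ∑' l : L, G (t - l) := by
    filter_upwards [(lintegral_eq_zero_iff hmeas).1
      (hL.setLIntegral_tsub_tsum_eq_zero hG hGint hr hΛ hw x)] with t ht
    exact tsub_eq_zero_iff_le.1 ht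
  refine measure_null_of_locally_null _ fun x _ ↦
    ⟨_, inter_mem_nhdsWithin _ (ball_mem_nhds x hr), ?_⟩
  rw [← Measure.restrict_apply' measurableSet_ball]
  exact locally_ae x

end LocalLimits

section Exponentials

variable (μ : Measure ℝ)

theorem conj_expF_mul_expF (s t x : ℝ) :
    starRingEnd ℂ (expF s x) * expF t x =
      Complex.exp (↑(2 * Real.pi * (t - s)) * x * Complex.I) := by
  unfold expF
  rw [← Complex.exp_conj, ← Complex.exp_add]
  congr 1
  simp only [map_mul, Complex.conj_ofReal, Complex.conj_I, map_ofNat]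
  push_cast
  ring

theorem memLp_expF [IsFiniteMeasure μ] (p : ℝ≥0∞) (s : ℝ) : MemLp (expF s) p μ := by
  have hcont : Continuous (expF s) := by unfold expF; fun_prop
  refine MemLp.of_bound hcont.aestronglyMeasurable 1 (.of_forall fun x ↦ le_of_eq ?_)
  rw [expF, ← Complex.norm_exp_ofReal_mul_I (2 * Real.pi * s * x)]
  push_cast
  ring_nf

/-- The exponential `expF s` as an element of `L²(μ)`. -/
noncomputable def expLp [IsFiniteMeasure μ] (s : ℝ) : Lp ℂ 2 μ :=
  (memLp_expF μ 2 s).toLp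

theorem inner_expLp [IsFiniteMeasure μ] (s t : ℝ) :
    inner ℂ (expLp μ s) (expLp μ t) = charFun μ (2 * Real.pi * (t - s)) := by
  rw [L2.inner_def, charFun_apply_real]
  refine integral_congr_ae ?_
  filter_upwards [(memLp_expF μ 2 s).coeFn_toLp, (memLp_expF μ 2 t).coeFn_toLp] with x hs ht
  rw [expLp, expLp, hs, ht, RCLike.inner_apply', conj_expF_mul_expF]

theorem continuous_expLp [IsFiniteMeasure μ] : Continuous (expLp μ) := by
  refine continuous_of_continuous_inner (𝕜 := ℂ) ?_
  simp only [inner_expLp]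
  exact continuous_charFun.comp (by fun_prop)

theorem norm_expLp [IsProbabilityMeasure μ] (s : ℝ) : ‖expLp μ s‖ = 1 := by
  rw [norm_eq_sqrt_re_inner (𝕜 := ℂ), inner_expLp]
  simp

theorem orthonormal_expLp_iff [IsProbabilityMeasure μ] {M : Set ℝ} :
    Orthonormal ℂ (fun m : M ↦ expLp μ m) ↔
      M.Pairwise fun x y ↦ charFun μ (2 * Real.pi * (x - y)) = 0 := by
  constructor
  · intro h x hx y hy hxy
    rw [← inner_expLp]
    exact h.2 (i := ⟨y, hy⟩) (j := ⟨x, hx⟩) fun e ↦ hxy (Subtype.mk.inj e).symm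
  · intro h
    refine ⟨fun m ↦ norm_expLp μ m, fun l m hlm ↦ ?_⟩
    exact (inner_expLp μ l m).trans (h m.2 l.2 fun e ↦ hlm (Subtype.ext e.symm))

end Exponentials

theorem isSpectrum_iff {Ω M : Set ℝ} [IsFiniteMeasure (volume.restrict Ω)] :
    IsSpectrum Ω M ↔ Orthonormal ℂ (fun m : M ↦ expLp (volume.restrict Ω) m) ∧
      (Submodule.span ℂ (range fun m : M ↦ expLp (volume.restrict Ω) m)).topologicalClosure
        = ⊤ := by
  constructor
  · rintro ⟨F, hF, hspec⟩
    obtain rfl : F = fun m : M ↦ expLp (volume.restrict Ω) m := funext fun m ↦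
      Lp.ext ((hF m).trans (memLp_expF _ 2 m).coeFn_toLp.symm)
    exact hspec
  · exact fun hspec ↦ ⟨_, fun m ↦ (memLp_expF _ 2 m).coeFn_toLp, hspec⟩

section Parseval

variable {Ω Λ L : Set ℝ}

theorem IsSpectrum.tsum_enorm_sq_charFun [IsProbabilityMeasure (volume.restrict Ω)]
    (hΛ : IsSpectrum Ω Λ) (t : ℝ) :
    ∑' l : Λ, ‖charFun (volume.restrict Ω) (2 * Real.pi * (t - l))‖ₑ ^ 2 = 1 := by
  obtain ⟨orthonormal, complete⟩ := isSpectrum_iff.1 hΛ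
  have parseval := tsum_enorm_inner_sq_of_hilbertBasis
    (HilbertBasis.mk orthonormal complete.ge) (expLp (volume.restrict Ω) t)
  simpa only [HilbertBasis.coe_mk, inner_expLp, ← ofReal_norm, norm_expLp, ENNReal.ofReal_one,
    one_pow] using parseval

theorem IsSpectrum.of_ae_one_le_tsum [IsProbabilityMeasure (volume.restrict Ω)]
    (hΛ : IsSpectrum Ω Λ)
    (hL : L.Pairwise fun x y ↦ charFun (volume.restrict Ω) (2 * Real.pi * (x - y)) = 0)
    (hsum : ∀ᵐ t : ℝ, 1 ≤ ∑' l : L, ‖charFun (volume.restrict Ω) (2 * Real.pi * (t - l))‖ₑ ^ 2) :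
    IsSpectrum Ω L := by
  have orthonormal := (orthonormal_expLp_iff (volume.restrict Ω)).2 hL
  set V := (Submodule.span ℂ (range fun l : L ↦ expLp (volume.restrict Ω) l)).topologicalClosure
  have hVclosed : IsClosed (V : Set (Lp ℂ 2 (volume.restrict Ω))) :=
    Submodule.isClosed_topologicalClosure _
  have ae_mem : ∀ᵐ t : ℝ, expLp (volume.restrict Ω) t ∈ V := by
    filter_upwards [hsum] with t ht
    refine mem_closure_span_of_enorm_sq_le_tsum orthonormal ?_
    simpa only [inner_expLp, ← ofReal_norm, norm_expLp, ENNReal.ofReal_one, one_pow] using ht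
  have mem (t : ℝ) : expLp (volume.restrict Ω) t ∈ V :=
    (hVclosed.preimage (continuous_expLp _)).closure_subset_iff.2 subset_rfl
      (Measure.dense_of_ae ae_mem t)
  refine isSpectrum_iff.2 ⟨orthonormal, top_le_iff.1 ?_⟩
  rw [← (isSpectrum_iff.1 hΛ).2]
  exact Submodule.topologicalClosure_minimal _
    (Submodule.span_le.2 (range_subset_iff.2 fun l ↦ mem l)) hVclosed

end Parseval

theorem limit_of_translates_is_spectrum_general (Ω : Set ℝ) (hvol : volume Ω = 1) (Λ : Set ℝ)
    (hΛ : IsSpectrum Ω Λ) (L : Set ℝ) (hL : IsLocalLimitOfTranslates L Λ) : IsSpectrum Ω L := by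
  have : IsProbabilityMeasure (volume.restrict Ω) := ⟨by rwa [Measure.restrict_apply_univ]⟩
  let φ (s : ℝ) : ℂ := charFun (volume.restrict Ω) (2 * Real.pi * s)
  have hφ : Continuous φ := continuous_charFun.comp (by fun_prop)
  have hφ₀ : φ 0 ≠ 0 := by simp [φ]
  have zeros : Λ.Pairwise fun x y ↦ φ (x - y) = 0 :=
    (orthonormal_expLp_iff _).1 (isSpectrum_iff.1 hΛ).1
  obtain ⟨r, hr, le_norm⟩ := exists_pos_le_norm_of_eq_zero hφ.continuousAt hφ₀
  have separated : Λ.Pairwise fun x y ↦ 2 * (r / 2) ≤ ‖x - y‖ := by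
    simpa only [mul_div_cancel₀ r two_ne_zero] using zeros.imp fun _ _ h ↦ le_norm _ h
  refine hΛ.of_ae_one_le_tsum (hL.pairwise_sub (p := fun s ↦ φ s = 0) zeros) ?_
  exact hL.ae_le_tsum (hφ.measurable.enorm.pow_const 2)
    (lintegral_enorm_sq_charFun_restrict_ne_top (hvol.trans_ne one_ne_top)) (half_pos hr) separated
    fun t ↦ (hΛ.tsum_enorm_sq_charFun t).ge

/-- A local limit of translates of a spectrum is again a spectrum: if
`L ∩ (-n, n) = (Λ - c_n) ∩ (-n, n)` for each `n ≥ 1` with `c_n ∈ Λ`,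
then `L` is a spectrum of `Ω`. -/
theorem limit_of_translates_is_spectrum (n : ℕ) (a b : Fin n → ℝ) (Ω : Set ℝ)
    (hΩ : Ω = ⋃ j, Ioo (a j) (b j))
    (hvol : volume Ω = 1)
    (Λ : Set ℝ) (hΛ : IsSpectrum Ω Λ)
    (L : Set ℝ) (c : ℕ → ℝ)
    (hc : ∀ k : ℕ, 1 ≤ k → c k ∈ Λ)
    (hL : ∀ k : ℕ, 1 ≤ k →
      L ∩ Ioo (-(k : ℝ)) (k : ℝ) = ((fun t => t - c k) '' Λ) ∩ Ioo (-(k : ℝ)) (k : ℝ)) :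
    IsSpectrum Ω L :=
  limit_of_translates_is_spectrum_general Ω hvol Λ hΛ L <| eventually_atTop.2
    ⟨1, fun k hk ↦ ⟨c k, by simpa only [Real.ball_eq_Ioo, zero_sub, zero_add] using hL k hk⟩⟩
end
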